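/- Let d ≥ 1, ε > 0 and a > 0. Define ν : ℤ^d → [0,∞) by ν_0 := a and, for x ≠ 0, ν_x := a · E_x[ 1{τ_0 < ∞} (1 + ε a)^{−τ_0} ], where τ_0 is the first hitting time of 0 by the simple random walk started at x. Then ν satisfies the balance equation with parameter ε: (1 + ε a) ν_x = (1/(2d)) Σ_{i=1}^d (ν_{x+e_i} + ν_{x−e_i}) for all x ∈ ℤ^d, x ≠ 0. -/

import Mathlib

open Finset

namespace CBRW

/-- The `i`-th canonical basis vector of `ℤ^d`. -/
def e (d : ℕ) (i : Fin d) : Fin d → ℤ := Pi.single i 1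

/-- The step of the simple random walk corresponding to the direction `(i, b)`:
`+e_i` if `b = true`, `-e_i` if `b = false`. -/
def dir (d : ℕ) (s : Fin d × Bool) : Fin d → ℤ := if s.2 then e d s.1 else -(e d s.1)

/-- The position at time `j` of the simple random walk started at `x` and driven by the
word of increments `w` (of length `k`); only the first `j` letters of `w` are used. -/
def posAt (d : ℕ) {k : ℕ} (x : Fin d → ℤ) (w : Fin k → Fin d × Bool) (j : ℕ) :
    Fin d → ℤ :=
  x + ∑ i : Fin k, if (i : ℕ) < j then dir d (w i) else 0

open Classical in
/-- `ℙ_x(τ_y = k)`: the probability that the simple random walk on `ℤ^d` started at `x`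
first visits `y` at time `k` (meaningful for `k ≥ 1`). -/
noncomputable def firstHitProb (d : ℕ) (x y : Fin d → ℤ) (k : ℕ) : ℝ :=
  ((Finset.univ.filter (fun w : Fin k → Fin d × Bool =>
      (∀ j, 1 ≤ j → j < k → posAt d x w j ≠ y) ∧ posAt d x w k = y)).card : ℝ) /
    (2 * (d : ℝ)) ^ k

open Classical in
/-- `ℙ_x(τ_y ≥ k + 1)`: the probability that the simple random walk on `ℤ^d` started at `x`
avoids `y` at all times `1, …, k`. -/
noncomputable def avoidProb (d : ℕ) (x y : Fin d → ℤ) (k : ℕ) : ℝ :=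
  ((Finset.univ.filter (fun w : Fin k → Fin d × Bool =>
      ∀ j, 1 ≤ j → j ≤ k → posAt d x w j ≠ y)).card : ℝ) / (2 * (d : ℝ)) ^ k

/-- `γ_d = ℙ_0(τ_0 = ∞)`: the probability that the simple random walk started at `0`
never returns to `0`. -/
noncomputable def gamma (d : ℕ) : ℝ := 1 - ∑' k : ℕ, firstHitProb d 0 0 (k + 1)

/-- `E_x[𝟙_{τ_y < ∞} (1 + u)^{-τ_y}]` for the simple random walk started at `x`. -/
noncomputable def hitGen (d : ℕ) (x y : Fin d → ℤ) (u : ℝ) : ℝ :=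
  ∑' k : ℕ, firstHitProb d x y (k + 1) * ((1 + u) ^ (k + 1))⁻¹

/-- `ν` satisfies the balance equation with parameter `ε`:
`(1 + ε ν 0) ν x = (1/(2d)) ∑ i (ν (x + e i) + ν (x - e i))` for all `x ≠ 0`. -/
def BalanceEq (d : ℕ) (ε : ℝ) (ν : (Fin d → ℤ) → ℝ) : Prop :=
  ∀ x : Fin d → ℤ, x ≠ 0 →
    (1 + ε * ν 0) * ν x =
      (1 / (2 * (d : ℝ))) * ∑ i : Fin d, (ν (x + e d i) + ν (x - e d i))

/-- `ν` is a probability measure on `ℤ^d`, identified with a nonnegative function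
summing to `1`. -/
def IsProbMeasure (d : ℕ) (ν : (Fin d → ℤ) → ℝ) : Prop :=
  (∀ x, 0 ≤ ν x) ∧ HasSum ν 1

end CBRW

/-!
Let `σ_y` be the first time `n ≥ 0` at which the walk is at `y`. Started at `y` it is `0`; started
elsewhere it agrees with `τ_y`. Conditioning on the first step gives, with `z = (1 + u)⁻¹`,
`E_x[z ^ τ_y] = z · (2d)⁻¹ ∑_s E_{x+s}[z ^ σ_y]`, which is the balance equation: the convention
`σ_0 = 0` at the origin is exactly what makes `ν_0 = a` fit the formula `ν_x = a E_x[z ^ σ_0]`.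
Splitting the series over `s` needs only `|z| ≤ 1`, as the law of `σ_y` has mass at most `1`.
-/

namespace CBRW

variable {d k : ℕ} {u : ℝ} {x y : Fin d → ℤ}

lemma card_filter_cons {α : Type*} [Fintype α] (p : (Fin (k + 1) → α) → Prop) [DecidablePred p] :
    #{w | p w} = ∑ s, #{w : Fin k → α | p (Fin.cons s w)} := by
  simp_rw [card_filter]
  rw [← (Fin.consEquiv fun _ : Fin (k + 1) => α).sum_comp, Fintype.sum_prod_type]
  rfl

lemma posAt_zero (x : Fin d → ℤ) (w : Fin k → Fin d × Bool) : posAt d x w 0 = x := by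
  simp [posAt]

lemma posAt_cons_succ (x : Fin d → ℤ) (s : Fin d × Bool) (w : Fin k → Fin d × Bool) (j : ℕ) :
    posAt d x (Fin.cons s w : Fin (k + 1) → Fin d × Bool) (j + 1) = posAt d (x + dir d s) w j := by
  simp [posAt, Fin.sum_univ_succ, add_assoc]

lemma sum_add_dir {M : Type*} [AddCommMonoid M] (f : (Fin d → ℤ) → M) (x : Fin d → ℤ) :
    ∑ s, f (x + dir d s) = ∑ i, (f (x + e d i) + f (x - e d i)) := by
  simp [Fintype.sum_prod_type, dir, sub_eq_add_neg]

open Classical in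
/-- `ℙ_x(σ_y = k)`, where `σ_y` is the first visit time of `y` counted from time `0`, unlike `τ_y`
in `firstHitProb`. As there, probabilities are proportions of words of length `k`. -/
noncomputable def firstVisitProb (d : ℕ) (x y : Fin d → ℤ) (k : ℕ) : ℝ :=
  #{w : Fin k → Fin d × Bool | (∀ j < k, posAt d x w j ≠ y) ∧ posAt d x w k = y} /
    (2 * (d : ℝ)) ^ k

lemma firstVisitProb_nonneg (x y : Fin d → ℤ) (k : ℕ) : 0 ≤ firstVisitProb d x y k := by
  unfold firstVisitProb
  positivity

lemma firstVisitProb_zero (x y : Fin d → ℤ) :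
    firstVisitProb d x y 0 = if x = y then 1 else 0 := by
  split_ifs with hxy <;> simp [firstVisitProb, posAt_zero, hxy]

lemma firstVisitProb_self_succ (y : Fin d → ℤ) (k : ℕ) : firstVisitProb d y y (k + 1) = 0 := by
  rw [firstVisitProb, filter_false_of_mem fun w _ hw => hw.1 0 k.succ_pos (posAt_zero y w),
    card_empty, Nat.cast_zero, zero_div]

lemma firstVisitProb_of_ne (hxy : x ≠ y) (k : ℕ) :
    firstVisitProb d x y k = firstHitProb d x y k := by
  have avoid_iff (w : Fin k → Fin d × Bool) :
      (∀ j < k, posAt d x w j ≠ y) ↔ ∀ j, 1 ≤ j → j < k → posAt d x w j ≠ y := by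
    refine ⟨fun h j _ hj => h j hj, fun h j hj => ?_⟩
    rcases j.eq_zero_or_pos with rfl | hj_pos
    · rwa [posAt_zero]
    · exact h j hj_pos hj
  unfold firstVisitProb firstHitProb
  congr! 5 with w
  exact avoid_iff w

lemma firstHit_cons_iff (x y : Fin d → ℤ) (s : Fin d × Bool) (w : Fin k → Fin d × Bool) :
    ((∀ j, 1 ≤ j → j < k + 1 → posAt d x (Fin.cons s w : Fin (k + 1) → Fin d × Bool) j ≠ y) ∧
        posAt d x (Fin.cons s w : Fin (k + 1) → Fin d × Bool) (k + 1) = y) ↔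
      (∀ j < k, posAt d (x + dir d s) w j ≠ y) ∧ posAt d (x + dir d s) w k = y := by
  rw [posAt_cons_succ]
  refine and_congr_left fun _ => ⟨fun h j hj => ?_, fun h j hj_pos hj => ?_⟩
  · simpa only [posAt_cons_succ] using h (j + 1) (by omega) (by omega)
  · obtain ⟨i, rfl⟩ := Nat.exists_eq_add_of_le' hj_pos
    simpa only [posAt_cons_succ] using h i (by omega)

lemma firstHitProb_succ (x y : Fin d → ℤ) (k : ℕ) :
    firstHitProb d x y (k + 1) =
      1 / (2 * (d : ℝ)) * ∑ s, firstVisitProb d (x + dir d s) y k := by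
  simp only [firstHitProb, firstVisitProb, card_filter_cons, firstHit_cons_iff]
  rw [← sum_div, ← Nat.cast_sum, div_mul_div_comm, one_mul, ← pow_succ']

lemma sum_range_firstVisitProb_le_one (x y : Fin d → ℤ) (n : ℕ) :
    ∑ k ∈ range n, firstVisitProb d x y k ≤ 1 := by
  induction n generalizing x with
  | zero => simp
  | succ n ih =>
    rw [sum_range_succ', firstVisitProb_zero]
    split_ifs with hxy
    · simp [hxy, firstVisitProb_self_succ]
    · calc ∑ k ∈ range n, firstVisitProb d x y (k + 1) + 0
          = 1 / (2 * (d : ℝ)) * ∑ s, ∑ k ∈ range n, firstVisitProb d (x + dir d s) y k := by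
            simp_rw [add_zero, firstVisitProb_of_ne hxy, firstHitProb_succ, ← mul_sum]
            rw [sum_comm]
        _ ≤ 1 / (2 * (d : ℝ)) * ∑ _s : Fin d × Bool, 1 := by
            gcongr with s
            exact ih (x + dir d s)
        _ = 2 * (d : ℝ) / (2 * d) := by
            simp only [sum_const, card_univ, Fintype.card_prod, Fintype.card_fin, Fintype.card_bool,
              nsmul_one, Nat.cast_mul, Nat.cast_ofNat]
            ring
        _ ≤ 1 := div_self_le_one _

lemma summable_firstVisitProb (x y : Fin d → ℤ) : Summable (firstVisitProb d x y) :=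
  summable_of_sum_range_le (firstVisitProb_nonneg x y) (sum_range_firstVisitProb_le_one x y)

lemma summable_firstVisitProb_mul_inv_pow (x y : Fin d → ℤ) (hu : 1 ≤ |1 + u|) :
    Summable fun k => firstVisitProb d x y k * ((1 + u) ^ k)⁻¹ := by
  refine (summable_firstVisitProb x y).of_norm_bounded fun k => ?_
  rw [norm_mul, Real.norm_of_nonneg (firstVisitProb_nonneg x y k), norm_inv, norm_pow]
  exact mul_le_of_le_one_right (firstVisitProb_nonneg x y k)
    (inv_le_one_of_one_le₀ (one_le_pow₀ hu))

/-- `E_x[𝟙_{σ_y < ∞} (1 + u)^{-σ_y}]`, the analogue of `hitGen` for the first visit time `σ_y`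
counted from time `0`. -/
noncomputable def visitGen (d : ℕ) (x y : Fin d → ℤ) (u : ℝ) : ℝ :=
  ∑' k : ℕ, firstVisitProb d x y k * ((1 + u) ^ k)⁻¹

lemma visitGen_self (y : Fin d → ℤ) (u : ℝ) : visitGen d y y u = 1 := by
  have vanish (k : ℕ) (hk : k ≠ 0) : firstVisitProb d y y k * ((1 + u) ^ k)⁻¹ = 0 := by
    obtain ⟨k, rfl⟩ := Nat.exists_eq_succ_of_ne_zero hk
    rw [firstVisitProb_self_succ, zero_mul]
  rw [visitGen, tsum_eq_single 0 vanish]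
  simp [firstVisitProb_zero]

lemma visitGen_of_ne (hxy : x ≠ y) (u : ℝ) : visitGen d x y u = hitGen d x y u := by
  have support_subset :
      (Function.support fun k => firstVisitProb d x y k * ((1 + u) ^ k)⁻¹) ⊆
        Set.range Nat.succ := by
    rw [Nat.range_succ]
    rintro (_ | k) hk
    · simp [firstVisitProb_zero, hxy] at hk
    · exact k.succ_pos
  simp_rw [visitGen, hitGen, ← Nat.succ_injective.tsum_eq support_subset, firstVisitProb_of_ne hxy]

theorem one_add_mul_hitGen (x y : Fin d → ℤ) (hu : 1 ≤ |1 + u|) :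
    (1 + u) * hitGen d x y u = 1 / (2 * (d : ℝ)) * ∑ s, visitGen d (x + dir d s) y u := by
  have hu_ne : 1 + u ≠ 0 := abs_pos.mp (one_pos.trans_le hu)
  calc (1 + u) * hitGen d x y u
      = ∑' k, 1 / (2 * (d : ℝ)) *
          ∑ s, firstVisitProb d (x + dir d s) y k * ((1 + u) ^ k)⁻¹ := by
        rw [hitGen, ← tsum_mul_left]
        refine tsum_congr fun k => ?_
        rw [firstHitProb_succ, ← sum_mul, pow_succ]
        field_simp
    _ = 1 / (2 * (d : ℝ)) * ∑ s, visitGen d (x + dir d s) y u := by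
        rw [tsum_mul_left,
          Summable.tsum_finsetSum fun s _ => summable_firstVisitProb_mul_inv_pow _ _ hu]
        rfl

end CBRW

open CBRW in
theorem discounted_hitting_satisfies_balance_general
    (d : ℕ) (ε a : ℝ) (hεa : 1 ≤ |1 + ε * a|) (ν : (Fin d → ℤ) → ℝ)
    (hν : ∀ x : Fin d → ℤ, ν x = if x = 0 then a else a * hitGen d x 0 (ε * a)) :
    BalanceEq d ε ν := by
  have ν_zero : ν 0 = a := by rw [hν, if_pos rfl]
  have ν_eq (x : Fin d → ℤ) : ν x = a * visitGen d x 0 (ε * a) := by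
    rw [hν]
    split_ifs with hx
    · rw [hx, visitGen_self, mul_one]
    · rw [visitGen_of_ne hx]
  intro x hx
  calc (1 + ε * ν 0) * ν x
      = a * ((1 + ε * a) * hitGen d x 0 (ε * a)) := by
        rw [ν_zero, ν_eq, visitGen_of_ne hx, mul_left_comm]
    _ = 1 / (2 * (d : ℝ)) * ∑ s, ν (x + dir d s) := by
        simp_rw [one_add_mul_hitGen x 0 hεa, ν_eq, ← mul_sum, mul_left_comm]
    _ = 1 / (2 * (d : ℝ)) * ∑ i, (ν (x + e d i) + ν (x - e d i)) := by
        rw [sum_add_dir]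

open CBRW in
/-- The measure defined by `ν 0 = a` and `ν x = a · E_x[𝟙_{τ_0<∞}(1 + ε a)^{-τ_0}]` for
`x ≠ 0` satisfies the balance equation with parameter `ε`. -/
theorem discounted_hitting_satisfies_balance
    (d : ℕ) (hd : 1 ≤ d) (ε a : ℝ) (hε : 0 < ε) (ha : 0 < a)
    (ν : (Fin d → ℤ) → ℝ)
    (hν : ∀ x : Fin d → ℤ, ν x = if x = 0 then a else a * hitGen d x 0 (ε * a)) :
    BalanceEq d ε ν := by
  have hεa : 0 < ε * a := mul_pos hε ha
  exact discounted_hitting_satisfies_balance_general d ε a (le_abs.mpr (.inl (by linarith))) ν hν
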